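/- Suppose 0 < α ≤ 1 and p_u^i = α/N + (1−α)·u^i/m for all admissible vectors u and all i ∈ [N], and that X_0^i > 0 for all i ∈ [N]. Then the vector field satisfies P(y) = (α/2)((1/N)·𝟏 − y) for all y ∈ Δ^N, where 𝟏 = (1,…,1), and the process {a_n} converges almost surely to the vector (1/N, …, 1/N). -/

import Mathlib

open MeasureTheory ProbabilityTheory Filter Set

noncomputable section

/-- The vector field `P(y)^i = (1/2) ∑_u (m choose u) y^u (p_u^i − u^i/m)`, where the sum
ranges over all `u : Fin N → ℕ` with `∑ i, u i = m`. -/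
def vecFieldP (N m : ℕ) (p : (Fin N → ℕ) → Fin N → ℝ) (y : Fin N → ℝ) : Fin N → ℝ :=
  fun i => (1 / 2) * ∑ u ∈ Finset.Nat.antidiagonalTuple N m,
    (Nat.multinomial Finset.univ u : ℝ) * (∏ j, y j ^ u j) * (p u i - (u i : ℝ) / m)

/-- The zero set `Z_P = {y ∈ Δ^N : P(y) = 0}` of the vector field on the probability
simplex. -/
def zeroSetVecP (N m : ℕ) (p : (Fin N → ℕ) → Fin N → ℝ) : Set (Fin N → ℝ) :=
  {y ∈ stdSimplex ℝ (Fin N) | vecFieldP N m p y = 0}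

/-- The `N`-type preferential attachment process with `m` edges per new node and type
adoption parameters `p u i` (for `u : Fin N → ℕ` with `∑ i, u i = m`), defined on a
probability space `(Ω, μ)` with filtration `F`.  `A n i` is the number of type-`i` nodes and
`X n i` the sum of the degrees of type-`i` nodes at time `n`; the transition given `F n` is:
a vector `u` is drawn from the `Multinomial(m, x_n)` distribution, an index `i` is drawn from
the distribution `p_u`, and then `A_{n+1} = A_n + δ^i`, `X_{n+1} = X_n + u + m δ^i`. -/
structure NPAProcess (Ω : Type) [MeasurableSpace Ω] where
  μ : Measure Ω
  isProb : IsProbabilityMeasure μ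
  N : ℕ
  m : ℕ
  hN : 2 ≤ N
  hm : 1 ≤ m
  p : (Fin N → ℕ) → Fin N → ℝ
  hp_nonneg : ∀ u ∈ Finset.Nat.antidiagonalTuple N m, ∀ i, 0 ≤ p u i
  hp_sum : ∀ u ∈ Finset.Nat.antidiagonalTuple N m, ∑ i, p u i = 1
  A : ℕ → Ω → Fin N → ℕ
  X : ℕ → Ω → Fin N → ℕ
  F : Filtration ℕ ‹MeasurableSpace Ω›
  A0 : Fin N → ℕ
  X0 : Fin N → ℕ
  hA0 : ∀ ω, A 0 ω = A0
  hX0 : ∀ ω, X 0 ω = X0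
  adaptedA : ∀ n, Measurable[F n] (A n)
  adaptedX : ∀ n, Measurable[F n] (X n)
  hXsum : ∀ n ω, ∑ i, X n ω i = ∑ i, X0 i + 2 * m * n
  step : ∀ n : ℕ, ∀ u ∈ Finset.Nat.antidiagonalTuple N m, ∀ i : Fin N,
    μ[Set.indicator
        {ω | (∀ j, A (n + 1) ω j = A n ω j + if j = i then 1 else 0) ∧
             (∀ j, X (n + 1) ω j = X n ω j + u j + if j = i then m else 0)}
        (fun _ => (1 : ℝ)) | F n]
      =ᵐ[μ] fun ω => (Nat.multinomial Finset.univ u : ℝ) *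
        (∏ j, ((X n ω j : ℝ) / ((∑ i', X0 i' : ℕ) + 2 * m * n : ℝ)) ^ u j) * p u i

namespace NPAProcess

variable {Ω : Type} [MeasurableSpace Ω] (P : NPAProcess Ω)

/-- Total degree `S_n = S_0 + 2mn`. -/
def S (n : ℕ) : ℕ := ∑ i, P.X0 i + 2 * P.m * n

/-- Normalized degree vector `x_n = X_n / S_n`. -/
def x (n : ℕ) (ω : Ω) : Fin P.N → ℝ := fun i => (P.X n ω i : ℝ) / (P.S n : ℝ)

/-- Normalized type-count vector `a_n = A_n / (∑ i, A_0^i + n)`. -/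
def a (n : ℕ) (ω : Ω) : Fin P.N → ℝ :=
  fun i => (P.A n ω i : ℝ) / ((∑ i', P.A0 i' : ℕ) + n : ℝ)

/-- The vector field `P` of the process. -/
def vec : (Fin P.N → ℝ) → Fin P.N → ℝ := vecFieldP P.N P.m P.p

/-- The zero set `Z_P` of the process. -/
def Zp : Set (Fin P.N → ℝ) := zeroSetVecP P.N P.m P.p

end NPAProcess

lemma aux_rec (a w s : ℕ → ℝ) (ha0 : ∀ n, 0 ≤ a n) (ha1 : ∀ n, a n ≤ 1)
    (hdiv : Tendsto (fun n => ∑ k ∈ Finset.range n, a k) atTop atTop)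
    (hs : Tendsto s atTop (nhds 0))
    (hw : ∀ n, w (n + 1) = (1 - a n) * w n + a n * s n) : Tendsto w atTop (nhds 0) := by
  rw [Metric.tendsto_atTop]
  intro ε hε
  rw [Metric.tendsto_atTop] at hs
  obtain ⟨n0, hn0⟩ := hs (ε / 2) (by positivity)
  have key : ∀ n, n0 ≤ n → |w n| - ε / 2 ≤ |w n0| *
      Real.exp (∑ k ∈ Finset.range n0, a k - ∑ k ∈ Finset.range n, a k) := by
    intro n hn
    induction n, hn using Nat.le_induction with
    | base => simp; positivity
    | succ n hn ih =>
      have h1 : |s n| ≤ ε / 2 := by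
        have := hn0 n hn
        rw [Real.dist_eq, sub_zero] at this
        exact this.le
      have h2 : |w (n + 1)| ≤ (1 - a n) * |w n| + a n * |s n| := by
        rw [hw]
        refine (abs_add_le _ _).trans ?_
        rw [abs_mul, abs_mul, abs_of_nonneg (ha0 n), abs_of_nonneg (sub_nonneg.2 (ha1 n))]
      have h3 : |w (n + 1)| - ε / 2 ≤ (1 - a n) * (|w n| - ε / 2) := by
        nlinarith [mul_le_mul_of_nonneg_left h1 (ha0 n)]
      have h4 := mul_le_mul_of_nonneg_left ih (sub_nonneg.2 (ha1 n))
      have h5 : 1 - a n ≤ Real.exp (- a n) := by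
        have := Real.add_one_le_exp (- a n); linarith
      have h6 : |w n0| * Real.exp (∑ k ∈ Finset.range n0, a k - ∑ k ∈ Finset.range (n + 1), a k)
          = Real.exp (- a n) * (|w n0| *
      Real.exp (∑ k ∈ Finset.range n0, a k - ∑ k ∈ Finset.range n, a k)) := by
        rw [Finset.sum_range_succ, mul_left_comm, ← Real.exp_add]
        congr 2; ring
      rw [h6]
      exact (h3.trans h4).trans (mul_le_mul_of_nonneg_right h5 (by positivity))
  have hlim : Tendsto (fun n => |w n0| *
      Real.exp (∑ k ∈ Finset.range n0, a k - ∑ k ∈ Finset.range n, a k)) atTop (nhds 0) := by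
    rw [← mul_zero (|w n0|)]
    refine Tendsto.const_mul _ (Real.tendsto_exp_atBot.comp ?_)
    simp only [sub_eq_add_neg]
    exact tendsto_atBot_add_const_left _ _ (tendsto_neg_atTop_atBot.comp hdiv)
  obtain ⟨n1, hn1⟩ := (Metric.tendsto_atTop.1 hlim) (ε / 2) (by positivity)
  refine ⟨max n0 n1, fun n hn => ?_⟩
  have h1 := key n (le_of_max_le_left hn)
  have h2 := hn1 n (le_of_max_le_right hn)
  rw [Real.dist_eq, sub_zero] at h2 ⊢
  have := le_abs_self (|w n0| *
      Real.exp (∑ k ∈ Finset.range n0, a k - ∑ k ∈ Finset.range n, a k))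
  linarith

lemma aux_rec2 (a w s b : ℕ → ℝ) (ha0 : ∀ n, 0 ≤ a n) (ha1 : ∀ n, a n ≤ 1)
    (hdiv : Tendsto (fun n => ∑ k ∈ Finset.range n, a k) atTop atTop)
    (hs : Tendsto s atTop (nhds 0))
    (hb : ∃ l, Tendsto (fun n => ∑ k ∈ Finset.range n, b k) atTop (nhds l))
    (hw : ∀ n, w (n + 1) = (1 - a n) * w n + a n * s n + b n) : Tendsto w atTop (nhds 0) := by
  obtain ⟨l, hl⟩ := hb
  have hr : Tendsto (fun n => l - ∑ k ∈ Finset.range n, b k) atTop (nhds 0) := by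
    simpa using (tendsto_const_nhds (x := l)).sub hl
  have := aux_rec a (fun n => w n + (l - ∑ k ∈ Finset.range n, b k))
    (fun n => s n + (l - ∑ k ∈ Finset.range n, b k)) ha0 ha1 hdiv (by simpa using hs.add hr)
    (fun n => by
      simp only [Finset.sum_range_succ, hw]; ring)
  simpa using this.sub hr

lemma div_harm (κ B : ℝ) (hκ : 0 < κ) (hB : 0 ≤ B) :
    Tendsto (fun n => ∑ k ∈ Finset.range n, κ / (B + k + 1)) atTop atTop := by
  have h : ∀ k : ℕ, κ / (B + 1) * (1 / ((k : ℝ) + 1)) ≤ κ / (B + k + 1) := by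
    intro k
    rw [div_mul_div_comm, mul_one]
    apply div_le_div_of_nonneg_left hκ.le (by positivity)
    have : 0 ≤ B * k := by positivity
    nlinarith
  refine tendsto_atTop_mono (fun n => Finset.sum_le_sum (fun k _ => h k)) ?_
  simp only [← Finset.mul_sum]
  exact Real.tendsto_sum_range_one_div_nat_succ_atTop.const_mul_atTop (by positivity)

lemma summ_sq (κ B : ℝ) (hB : 0 ≤ B) :
    Summable (fun k : ℕ => (κ / (B + k + 1)) ^ 2) := by
  have h1 : Summable (fun k : ℕ => κ ^ 2 * (1 / ((k + 1 : ℕ) : ℝ) ^ 2)) :=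
    ((summable_nat_add_iff 1).2 (Real.summable_one_div_nat_pow.2 one_lt_two)).mul_left _
  refine Summable.of_nonneg_of_le (fun k => by positivity) (fun k => ?_) h1
  rw [div_pow, mul_one_div]
  push_cast
  gcongr
  linarith

lemma multi_sum (N m : ℕ) (y : Fin N → ℝ) :
    ∑ u ∈ Finset.Nat.antidiagonalTuple N m,
      (Nat.multinomial Finset.univ u : ℝ) * (∏ j, y j ^ u j) = (∑ j, y j) ^ m := by
  rw [Finset.sum_pow_eq_sum_piAntidiag]
  refine Finset.sum_congr ?_ (fun _ _ => rfl)
  ext u; simp [Finset.Nat.mem_antidiagonalTuple]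

lemma multi_mean (N m : ℕ) (y : Fin N → ℝ) (i : Fin N) (hy : ∑ j, y j = 1) :
    ∑ u ∈ Finset.Nat.antidiagonalTuple N m,
      (Nat.multinomial Finset.univ u : ℝ) * (∏ j, y j ^ u j) * (u i : ℝ) = m * y i := by
  have h1 : ∀ t : ℝ, ∑ u ∈ Finset.Nat.antidiagonalTuple N m,
      (Nat.multinomial Finset.univ u : ℝ) * (∏ j, y j ^ u j) * t ^ u i
        = (1 + y i * (t - 1)) ^ m := by
    intro t
    have := multi_sum N m (fun j => y j * (if j = i then t else 1))
    rw [show ∑ j, y j * (if j = i then t else 1) = 1 + y i * (t - 1) by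
      have : ∀ j, y j * (if j = i then t else 1) = y j + if j = i then y j * (t - 1) else 0 := by
        intro j; split_ifs <;> ring
      simp [this, Finset.sum_add_distrib, hy]] at this
    rw [← this]
    refine Finset.sum_congr rfl fun u _ => ?_
    simp only [mul_pow, Finset.prod_mul_distrib, ite_pow, one_pow, mul_assoc]
    simp
  have hd1 : HasDerivAt (fun t : ℝ => ∑ u ∈ Finset.Nat.antidiagonalTuple N m,
      (Nat.multinomial Finset.univ u : ℝ) * (∏ j, y j ^ u j) * t ^ u i)
      (∑ u ∈ Finset.Nat.antidiagonalTuple N m,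
      (Nat.multinomial Finset.univ u : ℝ) * (∏ j, y j ^ u j) * (u i * 1 ^ (u i - 1))) 1 :=
    HasDerivAt.fun_sum fun u _ => (hasDerivAt_pow (u i) (1 : ℝ)).const_mul _
  have hd2 : HasDerivAt (fun t : ℝ => (1 + y i * (t - 1)) ^ m)
      (m * (1 + y i * (1 - 1)) ^ (m - 1) * (y i * 1)) 1 :=
    HasDerivAt.fun_pow ((((hasDerivAt_id (1:ℝ)).sub_const 1).const_mul (y i)).const_add 1) m
  rw [funext h1] at hd1
  simpa using hd1.unique hd2

lemma mart_conv {Ω : Type} [mΩ : MeasurableSpace Ω] (μ : Measure Ω) [IsProbabilityMeasure μ]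
    (F : Filtration ℕ mΩ) (ξ : ℕ → Ω → ℝ) (c : ℕ → ℝ) (C : ℝ)
    (hmeas : ∀ n, StronglyMeasurable[F (n + 1)] (ξ n))
    (hbd : ∀ n ω, |ξ n ω| ≤ C)
    (hce : ∀ n, μ[ξ n | F n] =ᵐ[μ] 0)
    (hc : Summable fun n => c n ^ 2) :
    ∀ᵐ ω ∂μ, ∃ l, Tendsto (fun n => ∑ k ∈ Finset.range n, c k * ξ k ω) atTop (nhds l) := by
  set M : ℕ → Ω → ℝ := fun n ω => ∑ k ∈ Finset.range n, c k * ξ k ω with hM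
  have hξm : ∀ n, AEStronglyMeasurable (ξ n) μ :=
    fun n => ((hmeas n).mono (F.le _)).aestronglyMeasurable
  have hξL : ∀ n, MemLp (ξ n) 2 μ := fun n =>
    MemLp.of_bound (hξm n) C (ae_of_all _ fun ω => by simpa using hbd n ω)
  have hML : ∀ n, MemLp (M n) 2 μ := fun n =>
    memLp_finsetSum _ (fun k _ => (hξL k).const_mul (c k))
  have hadp : StronglyAdapted F M := by
    intro n
    refine Finset.stronglyMeasurable_fun_sum _ fun k hk => ?_
    refine StronglyMeasurable.const_mul ((hmeas k).mono (F.mono ?_)) _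
    exact Finset.mem_range.1 hk
  have hstep : ∀ n ω, M (n + 1) ω = M n ω + c n * ξ n ω := fun n ω => by
    simp [hM, Finset.sum_range_succ]
  have hint : ∀ n, Integrable (M n) μ := fun n => (hML n).integrable one_le_two
  have hmart : Martingale M F μ := by
    refine martingale_of_condExp_sub_eq_zero_nat hadp hint fun n => ?_
    have : M (n + 1) - M n = c n • ξ n := by
      ext ω; simp [hstep]
    rw [this]
    filter_upwards [condExp_smul (μ := μ) (c n) (ξ n) (F n), hce n] with ω h1 h2
    rw [h1]; simp [h2]
  have hcross : ∀ n, ∫ ω, M n ω * ξ n ω ∂μ = 0 := by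
    intro n
    have hi : Integrable (M n * ξ n) μ := (hML n).integrable_mul (hξL n)
    have h1 := condExp_mul_of_stronglyMeasurable_left (hadp n) hi
      ((hξL n).integrable one_le_two)
    have h2 : ∫ ω, (μ[M n * ξ n | F n]) ω ∂μ = ∫ ω, (M n * ξ n) ω ∂μ :=
      integral_condExp (F.le n)
    simp only [Pi.mul_apply] at h2
    rw [← h2]
    rw [integral_congr_ae (g := fun _ => 0)]
    · simp
    · filter_upwards [h1, hce n] with ω h3 h4
      rw [h3]; simp [h4]
  have hsq : ∀ n, ∫ ω, M n ω ^ 2 ∂μ ≤ C ^ 2 * ∑ k ∈ Finset.range n, c k ^ 2 := by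
    intro n
    induction n with
    | zero => simp [hM]
    | succ n ih =>
      have e : ∀ ω, M (n + 1) ω ^ 2 = M n ω ^ 2 + (2 * c n * (M n ω * ξ n ω)
        + c n ^ 2 * ξ n ω ^ 2) := fun ω => by rw [hstep]; ring
      simp only [e]
      have i1 := (hML n).integrable_sq
      have i2 : Integrable (fun ω => M n ω * ξ n ω) μ := (hML n).integrable_mul (hξL n)
      have i3 := (hξL n).integrable_sq
      have i4 : Integrable (fun ω => 2 * c n * (M n ω * ξ n ω) + c n ^ 2 * ξ n ω ^ 2) μ :=
        (i2.const_mul _).add (i3.const_mul _)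
      rw [integral_add i1 i4,
        integral_add (i2.const_mul _) (i3.const_mul _), integral_const_mul, integral_const_mul,
        hcross, Finset.sum_range_succ]
      have : ∫ ω, ξ n ω ^ 2 ∂μ ≤ C ^ 2 := by
        have h := integral_mono i3 (integrable_const (C ^ 2)) (fun ω => by
          have := hbd n ω
          exact sq_le_sq' (abs_le.1 this).1 (abs_le.1 this).2)
        simpa using h
      nlinarith [mul_le_mul_of_nonneg_left this (sq_nonneg (c n))]
  set K := C ^ 2 * ∑' k, c k ^ 2 with hK
  have hsq' : ∀ n, ∫ ω, M n ω ^ 2 ∂μ ≤ K := fun n => (hsq n).trans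
    (mul_le_mul_of_nonneg_left (hc.sum_le_tsum _ (fun k _ => sq_nonneg _)) (sq_nonneg _))
  have hL1 : ∀ n, eLpNorm (M n) 1 μ ≤ ((K + 1).toNNReal : ENNReal) := by
    intro n
    rw [eLpNorm_one_eq_lintegral_enorm, ← ofReal_integral_norm_eq_lintegral_enorm (hint n)]
    apply ENNReal.ofReal_le_ofReal
    have h := integral_mono (hint n).norm ((hML n).integrable_sq.add (integrable_const 1))
      (fun ω => by
        simp only [Pi.add_apply, Real.norm_eq_abs]
        nlinarith [sq_abs (M n ω), sq_nonneg (|M n ω| - 1), abs_nonneg (M n ω)])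
    refine h.trans ?_
    simp only [Pi.add_apply]
    rw [integral_add (hML n).integrable_sq (integrable_const 1)]
    simpa using hsq' n
  exact hmart.submartingale.exists_ae_tendsto_of_bdd hL1

namespace NPAProcess

variable {Ω : Type} [MeasurableSpace Ω] (P : NPAProcess Ω)

def T : Finset ((Fin P.N → ℕ) × Fin P.N) :=
  Finset.Nat.antidiagonalTuple P.N P.m ×ˢ Finset.univ

def Ev (n : ℕ) (t : (Fin P.N → ℕ) × Fin P.N) : Set Ω :=
  {ω | (∀ j, P.A (n + 1) ω j = P.A n ω j + if j = t.2 then 1 else 0) ∧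
             (∀ j, P.X (n + 1) ω j = P.X n ω j + t.1 j + if j = t.2 then P.m else 0)}

def q (n : ℕ) (t : (Fin P.N → ℕ) × Fin P.N) (ω : Ω) : ℝ :=
  (Nat.multinomial Finset.univ t.1 : ℝ) * (∏ j, P.x n ω j ^ t.1 j) * P.p t.1 t.2

def ind (n : ℕ) (t : (Fin P.N → ℕ) × Fin P.N) : Ω → ℝ :=
  (P.Ev n t).indicator (fun _ => (1 : ℝ))

lemma step' (n : ℕ) (t) (ht : t ∈ P.T) : P.μ[P.ind n t | P.F n] =ᵐ[P.μ] P.q n t := by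
  have h := P.step n t.1 (Finset.mem_product.1 ht).1 t.2
  refine h.trans (ae_of_all _ fun ω => ?_)
  simp only [q, x, S]
  push_cast
  rfl

lemma S_pos (hX0 : ∀ i, 0 < P.X0 i) (n : ℕ) : 0 < (P.S n : ℝ) := by
  have : 0 < ∑ i, P.X0 i := Finset.sum_pos (fun i _ => hX0 i)
    ⟨⟨0, by have := P.hN; omega⟩, Finset.mem_univ _⟩
  unfold S
  exact_mod_cast (by positivity)

lemma x_sum (hX0 : ∀ i, 0 < P.X0 i) (n : ℕ) (ω : Ω) : ∑ j, P.x n ω j = 1 := by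
  unfold x
  rw [← Finset.sum_div, div_eq_one_iff_eq (P.S_pos hX0 n).ne', ← Nat.cast_sum, P.hXsum]
  rfl

lemma x_nonneg (n : ℕ) (ω : Ω) (j) : 0 ≤ P.x n ω j := by unfold x; positivity

lemma x_le_one (hX0 : ∀ i, 0 < P.X0 i) (n : ℕ) (ω : Ω) (j) : P.x n ω j ≤ 1 := by
  rw [← P.x_sum hX0 n ω]
  exact Finset.single_le_sum (f := fun j => P.x n ω j) (fun i _ => P.x_nonneg n ω i)
    (Finset.mem_univ j)

lemma meas_Ev (n : ℕ) (t) : MeasurableSet[P.F (n + 1)] (P.Ev n t) := by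
  have hA1 := P.adaptedA (n + 1)
  have hX1 := P.adaptedX (n + 1)
  have hA := (P.adaptedA n).mono (P.F.mono (Nat.le_succ n)) le_rfl
  have hX := (P.adaptedX n).mono (P.F.mono (Nat.le_succ n)) le_rfl
  have h1 : ∀ j, Measurable[P.F (n + 1)] (fun ω => P.A (n + 1) ω j) := fun j =>
    (measurable_pi_apply j).comp hA1
  have h2 : ∀ j, Measurable[P.F (n + 1)] (fun ω => P.X (n + 1) ω j) := fun j =>
    (measurable_pi_apply j).comp hX1
  have h3 : ∀ j, Measurable[P.F (n + 1)] (fun ω => P.A n ω j) := fun j =>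
    (measurable_pi_apply j).comp hA
  have h4 : ∀ j, Measurable[P.F (n + 1)] (fun ω => P.X n ω j) := fun j =>
    (measurable_pi_apply j).comp hX
  unfold Ev
  rw [Set.setOf_and, Set.setOf_forall, Set.setOf_forall]
  letI := P.F (n + 1)
  exact (MeasurableSet.iInter fun j => measurableSet_eq_fun (h1 j) ((h3 j).add_const _)).inter
    (MeasurableSet.iInter fun j => measurableSet_eq_fun (h2 j)
      (((h4 j).add_const _).add_const _))

lemma meas_ind (n : ℕ) (t) : StronglyMeasurable[P.F (n + 1)] (P.ind n t) :=
  stronglyMeasurable_const.indicator (P.meas_Ev n t)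

lemma ind_nonneg (n : ℕ) (t) (ω) : 0 ≤ P.ind n t ω :=
  Set.indicator_nonneg (fun _ _ => zero_le_one) _

lemma ind_le_one (n : ℕ) (t) (ω) : P.ind n t ω ≤ 1 :=
  Set.indicator_le_self' (f := fun _ => (1 : ℝ)) (fun _ _ => zero_le_one) ω

lemma meas_q (n : ℕ) (t) : StronglyMeasurable[P.F n] (P.q n t) := by
  have hX : ∀ j, Measurable[P.F n] (fun ω => P.x n ω j) := fun j => by
    have : Measurable[P.F n] (fun ω => P.X n ω j) := (measurable_pi_apply j).comp (P.adaptedX n)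
    exact ((measurable_from_top (f := fun k : ℕ => (k : ℝ))).comp this).div_const _
  refine Measurable.stronglyMeasurable ?_
  unfold q
  exact ((Finset.measurable_fun_prod _ fun j _ => (hX j).pow_const _).const_mul _).mul_const _

lemma q_bd (hX0 : ∀ i, 0 < P.X0 i) (n : ℕ) (t) (ω) :
    |P.q n t ω| ≤ (Nat.multinomial Finset.univ t.1 : ℝ) * |P.p t.1 t.2| := by
  unfold q
  rw [abs_mul]
  refine mul_le_mul_of_nonneg_right ?_ (abs_nonneg _)
  have h0 : 0 ≤ ∏ j, P.x n ω j ^ t.1 j :=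
    Finset.prod_nonneg fun j _ => pow_nonneg (P.x_nonneg n ω j) _
  rw [abs_of_nonneg (by positivity)]
  refine mul_le_of_le_one_right (by positivity) ?_
  exact Finset.prod_le_one (fun j _ => pow_nonneg (P.x_nonneg n ω j) _)
    fun j _ => pow_le_one₀ (P.x_nonneg n ω j) (P.x_le_one hX0 n ω j)

lemma int_ind (n : ℕ) (t) : Integrable (P.ind n t) P.μ := by
  haveI := P.isProb
  exact Integrable.of_bound (((P.meas_ind n t).mono (P.F.le _)).aestronglyMeasurable) 1
    (ae_of_all _ fun ω => by
      rw [Real.norm_eq_abs, abs_of_nonneg (P.ind_nonneg n t ω)]; exact P.ind_le_one n t ω)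

lemma int_q (hX0 : ∀ i, 0 < P.X0 i) (n : ℕ) (t) : Integrable (P.q n t) P.μ := by
  haveI := P.isProb
  exact Integrable.of_bound (((P.meas_q n t).mono (P.F.le _)).aestronglyMeasurable) _
    (ae_of_all _ fun ω => P.q_bd hX0 n t ω)

lemma noise_conv (hX0 : ∀ i, 0 < P.X0 i) (v : (Fin P.N → ℕ) × Fin P.N → ℝ) (c : ℕ → ℝ)
    (hc : Summable fun n => c n ^ 2) :
    ∀ᵐ ω ∂P.μ, ∃ l, Tendsto (fun n => ∑ k ∈ Finset.range n,
      c k * (∑ t ∈ P.T, v t * (P.ind k t ω - P.q k t ω))) atTop (nhds l) := by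
  haveI := P.isProb
  refine mart_conv P.μ P.F (fun k ω => ∑ t ∈ P.T, v t * (P.ind k t ω - P.q k t ω)) c
    (∑ t ∈ P.T, |v t| * (1 + (Nat.multinomial Finset.univ t.1 : ℝ) * |P.p t.1 t.2|))
    ?_ ?_ ?_ hc
  · intro n
    refine Finset.stronglyMeasurable_fun_sum _ fun t _ => ?_
    exact ((P.meas_ind n t).sub ((P.meas_q n t).mono (P.F.mono (Nat.le_succ n)))).const_mul _
  · intro n ω
    refine (Finset.abs_sum_le_sum_abs _ _).trans (Finset.sum_le_sum fun t _ => ?_)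
    rw [abs_mul]
    refine mul_le_mul_of_nonneg_left ?_ (abs_nonneg _)
    refine (abs_sub _ _).trans (add_le_add ?_ (P.q_bd hX0 n t ω))
    rw [abs_of_nonneg (P.ind_nonneg n t ω)]; exact P.ind_le_one n t ω
  · intro n
    have e : (fun ω => ∑ t ∈ P.T, v t * (P.ind n t ω - P.q n t ω))
        = ∑ t ∈ P.T, v t • (P.ind n t - P.q n t) := by
      ext ω; simp
    rw [e]
    have hi : ∀ t, Integrable (P.ind n t - P.q n t) P.μ := fun t =>
      (P.int_ind n t).sub (P.int_q hX0 n t)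
    refine (condExp_finsetSum (fun t _ => (hi t).smul (v t)) _).trans ?_
    have h : ∀ t ∈ P.T, P.μ[v t • (P.ind n t - P.q n t) | P.F n] =ᵐ[P.μ] 0 := by
      intro t ht
      filter_upwards [condExp_smul (μ := P.μ) (v t) (P.ind n t - P.q n t) (P.F n),
        condExp_sub (P.int_ind n t) (P.int_q hX0 n t) (P.F n), P.step' n t ht] with ω h1 h2 h3
      rw [h1, Pi.smul_apply, h2, Pi.sub_apply, h3,
        condExp_of_stronglyMeasurable (P.F.le n) (P.meas_q n t) (P.int_q hX0 n t)]
      simp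
    have h' : ∀ᵐ ω ∂P.μ, ∀ t ∈ P.T, (P.μ[v t • (P.ind n t - P.q n t) | P.F n]) ω = 0 :=
      (Finset.eventually_all P.T).2 h
    filter_upwards [h'] with ω hω
    rw [Finset.sum_apply, Finset.sum_eq_zero hω]; rfl

lemma q_sum (hX0 : ∀ i, 0 < P.X0 i) (n : ℕ) (ω) : ∑ t ∈ P.T, P.q n t ω = 1 := by
  unfold T
  rw [Finset.sum_product]
  have := multi_sum P.N P.m (P.x n ω)
  rw [P.x_sum hX0, one_pow] at this
  rw [← this]
  refine Finset.sum_congr rfl fun u hu => ?_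
  simp only [q]
  rw [← Finset.mul_sum, P.hp_sum u hu, mul_one]

lemma Ev_disj (n : ℕ) (s t) (ω) (hs : ω ∈ P.Ev n s) (ht : ω ∈ P.Ev n t) : s = t := by
  obtain ⟨a1, a2⟩ := hs
  obtain ⟨b1, b2⟩ := ht
  have h2 : s.2 = t.2 := by
    by_contra hne
    have h1 := a1 s.2
    rw [b1 s.2] at h1
    simp [hne] at h1
  refine Prod.ext ?_ h2
  funext j
  have h1 := a2 j
  rw [b2 j, h2] at h1
  omega

lemma ind_sum (n : ℕ) (ω) (s) (hs : s ∈ P.T) (h : ω ∈ P.Ev n s)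
    (v : (Fin P.N → ℕ) × Fin P.N → ℝ) : ∑ t ∈ P.T, v t * P.ind n t ω = v s := by
  rw [Finset.sum_eq_single_of_mem s hs]
  · simp [ind, h]
  · intro t _ hne
    have : ω ∉ P.Ev n t := fun h' => hne (P.Ev_disj n t s ω h' h)
    simp [ind, this]

lemma ae_step (hX0 : ∀ i, 0 < P.X0 i) (n : ℕ) : ∀ᵐ ω ∂P.μ, ∃ s ∈ P.T, ω ∈ P.Ev n s := by
  haveI := P.isProb
  have hG : ∀ ω, (∃ s ∈ P.T, ω ∈ P.Ev n s) ∨ ∑ t ∈ P.T, P.ind n t ω = 0 := by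
    intro ω
    by_cases h : ∃ s ∈ P.T, ω ∈ P.Ev n s
    · exact Or.inl h
    · right
      push Not at h
      exact Finset.sum_eq_zero fun t ht => by simp [ind, h t ht]
  have hle : ∀ ω, 0 ≤ 1 - ∑ t ∈ P.T, P.ind n t ω := by
    intro ω
    rcases hG ω with ⟨s, hs, h⟩ | h
    · have := P.ind_sum n ω s hs h (fun _ => 1)
      simp only [one_mul] at this
      simp [this]
    · simp [h]
  have hi : Integrable (fun ω => ∑ t ∈ P.T, P.ind n t ω) P.μ :=
    integrable_finsetSum _ fun t _ => P.int_ind n t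
  have hint : ∫ ω, (1 - ∑ t ∈ P.T, P.ind n t ω) ∂P.μ = 0 := by
    rw [integral_sub (integrable_const 1) hi, integral_finsetSum _ fun t _ => P.int_ind n t]
    have : ∀ t ∈ P.T, ∫ ω, P.ind n t ω ∂P.μ = ∫ ω, P.q n t ω ∂P.μ := by
      intro t ht
      rw [← integral_condExp (P.F.le n)]
      exact integral_congr_ae (P.step' n t ht)
    rw [Finset.sum_congr rfl this, ← integral_finsetSum _ fun t _ => P.int_q hX0 n t]
    simp [P.q_sum hX0]
  have := (integral_eq_zero_iff_of_nonneg (μ := P.μ) hle ((integrable_const 1).sub hi)).1 hint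
  filter_upwards [this] with ω hω
  rcases hG ω with h | h
  · exact h
  · simp [h] at hω

lemma q_meanA (hX0 : ∀ i, 0 < P.X0 i) (α : ℝ)
    (hp : ∀ u ∈ Finset.Nat.antidiagonalTuple P.N P.m, ∀ i,
      P.p u i = α / P.N + (1 - α) * (u i : ℝ) / P.m) (n : ℕ) (ω) (j : Fin P.N) :
    ∑ t ∈ P.T, (if j = t.2 then (1 : ℝ) else 0) * P.q n t ω
      = α / P.N + (1 - α) * P.x n ω j := by
  have hm : (P.m : ℝ) ≠ 0 := by have := P.hm; positivity
  have h1 := multi_sum P.N P.m (P.x n ω)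
  rw [P.x_sum hX0, one_pow] at h1
  have h2 := multi_mean P.N P.m (P.x n ω) j (P.x_sum hX0 n ω)
  unfold T
  rw [Finset.sum_product]
  have : ∀ u ∈ Finset.Nat.antidiagonalTuple P.N P.m,
      ∑ i, (if j = i then (1 : ℝ) else 0) * P.q n (u, i) ω =
      α / P.N * ((Nat.multinomial Finset.univ u : ℝ) * (∏ j, P.x n ω j ^ u j)) +
      (1 - α) / P.m * ((Nat.multinomial Finset.univ u : ℝ) * (∏ j, P.x n ω j ^ u j) * u j) := by
    intro u hu
    simp only [ite_mul, one_mul, zero_mul, Finset.sum_ite_eq, Finset.mem_univ, if_true, q]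
    rw [hp u hu]; ring
  simp only
  rw [Finset.sum_congr rfl this, Finset.sum_add_distrib, ← Finset.mul_sum, ← Finset.mul_sum,
    h1, h2]
  field_simp

lemma q_meanU (hX0 : ∀ i, 0 < P.X0 i) (n : ℕ) (ω) (j : Fin P.N) :
    ∑ t ∈ P.T, (t.1 j : ℝ) * P.q n t ω = P.m * P.x n ω j := by
  have h2 := multi_mean P.N P.m (P.x n ω) j (P.x_sum hX0 n ω)
  unfold T
  rw [Finset.sum_product, ← h2]
  refine Finset.sum_congr rfl fun u hu => ?_
  simp only [q]
  rw [← Finset.mul_sum, ← Finset.mul_sum, P.hp_sum u hu]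
  ring

end NPAProcess

lemma NPAProcess.conv_coord {Ω : Type} [MeasurableSpace Ω] (P : NPAProcess Ω)
    (α : ℝ) (hα0 : 0 < α) (hα1 : α ≤ 1)
    (hp : ∀ u ∈ Finset.Nat.antidiagonalTuple P.N P.m, ∀ i,
      P.p u i = α / P.N + (1 - α) * (u i : ℝ) / P.m)
    (hX0 : ∀ i, 0 < P.X0 i) (j : Fin P.N) :
    ∀ᵐ ω ∂P.μ, Tendsto (fun n => P.a n ω j) atTop (nhds (1 / (P.N : ℝ))) := by
  have hm : (0 : ℝ) < P.m := by have := P.hm; positivity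
  have hN : (0 : ℝ) < P.N := by have := P.hN; positivity
  set B : ℝ := ((∑ i, P.X0 i : ℕ) : ℝ) / (2 * P.m) with hB
  have hB0 : 0 ≤ B := by positivity
  set D : ℝ := ((∑ i, P.A0 i : ℕ) : ℝ) with hD
  have hD0 : 0 ≤ D := by positivity
  have hS : ∀ n : ℕ, (P.S n : ℝ) = 2 * P.m * (B + n) := by
    intro n
    simp only [NPAProcess.S, hB]
    push_cast
    field_simp
  filter_upwards [P.noise_conv hX0 (fun t => (t.1 j : ℝ) + P.m * (if j = t.2 then 1 else 0))
      (fun k => (1 / (2 * P.m)) / (B + k + 1)) (summ_sq _ _ hB0),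
    P.noise_conv hX0 (fun t => if j = t.2 then 1 else 0)
      (fun k => 1 / (D + k + 1)) (summ_sq _ _ hD0),
    ae_all_iff.2 (P.ae_step hX0)] with ω hx ha hst
  have hξ : ∀ n, ∑ t ∈ P.T, ((t.1 j : ℝ) + P.m * (if j = t.2 then 1 else 0)) *
      (P.ind n t ω - P.q n t ω) = (P.X (n + 1) ω j : ℝ) - P.X n ω j
        - (P.m * P.x n ω j + P.m * (α / P.N + (1 - α) * P.x n ω j)) := by
    intro n
    obtain ⟨s, hs, h⟩ := hst n
    simp only [mul_sub, Finset.sum_sub_distrib]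
    rw [P.ind_sum n ω s hs h (fun t => (t.1 j : ℝ) + P.m * (if j = t.2 then 1 else 0))]
    simp only [add_mul, Finset.sum_add_distrib, mul_assoc]
    rw [← Finset.mul_sum, P.q_meanA hX0 α hp, P.q_meanU hX0, h.2 j]
    push_cast
    split_ifs <;> simp <;> ring
  have hζ : ∀ n, ∑ t ∈ P.T, (if j = t.2 then (1 : ℝ) else 0) *
      (P.ind n t ω - P.q n t ω) = (P.A (n + 1) ω j : ℝ) - P.A n ω j
        - (α / P.N + (1 - α) * P.x n ω j) := by
    intro n
    obtain ⟨s, hs, h⟩ := hst n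
    simp only [mul_sub, Finset.sum_sub_distrib]
    rw [P.ind_sum n ω s hs h (fun t => (if j = t.2 then 1 else 0)),
      P.q_meanA hX0 α hp, h.1 j]
    push_cast
    split_ifs <;> simp
  have hxX : ∀ n, (P.X n ω j : ℝ) = P.x n ω j * (2 * P.m * (B + n)) := by
    intro n
    rw [← hS]
    simp only [NPAProcess.x]
    rw [div_mul_cancel₀ _ (P.S_pos hX0 n).ne']
  have haA : ∀ n, (P.A n ω j : ℝ) = P.a n ω j * (D + n) := by
    intro n
    simp only [NPAProcess.a]
    by_cases h0 : D + n = 0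
    · have hn : (n : ℝ) = 0 := by have : (0:ℝ) ≤ n := by positivity
                                  linarith
      have hD' : D = 0 := by linarith
      have hn' : n = 0 := by exact_mod_cast hn
      subst hn'
      have : ∑ i, P.A0 i = 0 := Nat.cast_eq_zero.1 (hD.symm.trans hD')
      rw [Finset.sum_eq_zero_iff] at this
      rw [P.hA0, this j (Finset.mem_univ j)]
      simp
    · rw [← hD, div_mul_cancel₀ _ h0]
  have hy : Tendsto (fun n => P.x n ω j - 1 / P.N) atTop (nhds 0) := by
    refine aux_rec2 (fun n => (α / 2) / (B + n + 1)) _ (fun _ => 0) _ (fun n => by positivity)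
      (fun n => ?_) (div_harm _ _ (by positivity) hB0) tendsto_const_nhds hx (fun n => ?_)
    · have : (0:ℝ) ≤ n := by positivity
      rw [div_le_one (by positivity)]; linarith
    · rw [hξ, hxX (n + 1), hxX n]
      have : B + n + 1 ≠ 0 := by positivity
      push_cast
      field_simp
      ring
  have hz : Tendsto (fun n => P.a n ω j - 1 / P.N) atTop (nhds 0) := by
    refine aux_rec2 (fun n => 1 / (D + n + 1)) _
      (fun n => (1 - α) * (P.x n ω j - 1 / P.N)) _ (fun n => by positivity)
      (fun n => ?_) (div_harm _ _ one_pos hD0) (by simpa using hy.const_mul (1 - α)) ha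
      (fun n => ?_)
    · have : (0:ℝ) ≤ n := by positivity
      rw [div_le_one (by positivity)]; linarith
    · rw [hζ, haA (n + 1), haA n]
      have : D + n + 1 ≠ 0 := by positivity
      push_cast
      field_simp
      ring
  simpa using hz.add_const (1 / (P.N : ℝ))

/-- **Mixture of the linear model and uniform choice.** Suppose `0 < α ≤ 1` and
`p_u^i = α/N + (1−α) u^i/m` for all admissible `u` and all `i`, and `X_0^i > 0` for all `i`.
Then the vector field satisfies `P(y) = (α/2)((1/N)·𝟏 − y)` on the simplex `Δ^N`, and the
process `{a_n}` converges almost surely to the vector `(1/N, …, 1/N)`. -/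
theorem Ntype_uniform_mixture_convergence
    {Ω : Type} [MeasurableSpace Ω] (P : NPAProcess Ω)
    (α : ℝ) (hα0 : 0 < α) (hα1 : α ≤ 1)
    (hp : ∀ u ∈ Finset.Nat.antidiagonalTuple P.N P.m, ∀ i,
      P.p u i = α / P.N + (1 - α) * (u i : ℝ) / P.m)
    (hX0 : ∀ i, 0 < P.X0 i) :
    (∀ y ∈ stdSimplex ℝ (Fin P.N),
      P.vec y = fun i => (α / 2) * (1 / P.N - y i)) ∧
    (∀ᵐ ω ∂P.μ,
      Tendsto (fun n => P.a n ω) atTop (nhds (fun _ => 1 / (P.N : ℝ)))) := by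
  refine ⟨fun y hy => ?_, ?_⟩
  · funext i
    have hm : (P.m : ℝ) ≠ 0 := by have := P.hm; positivity
    have h1 := multi_sum P.N P.m y
    rw [hy.2, one_pow] at h1
    have h2 := multi_mean P.N P.m y i hy.2
    simp only [NPAProcess.vec, vecFieldP]
    have : ∀ u ∈ Finset.Nat.antidiagonalTuple P.N P.m,
        (Nat.multinomial Finset.univ u : ℝ) * (∏ j, y j ^ u j) * (P.p u i - (u i : ℝ) / P.m) =
        α / P.N * ((Nat.multinomial Finset.univ u : ℝ) * (∏ j, y j ^ u j)) -
        α / P.m * ((Nat.multinomial Finset.univ u : ℝ) * (∏ j, y j ^ u j) * u i) := by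
      intro u hu
      rw [hp u hu]; ring
    rw [Finset.sum_congr rfl this, Finset.sum_sub_distrib, ← Finset.mul_sum, ← Finset.mul_sum,
      h1, h2]
    field_simp
  · filter_upwards [ae_all_iff.2 (P.conv_coord α hα0 hα1 hp hX0)] with ω hω
    exact tendsto_pi_nhds.2 hω
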